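/- For all integers n ≥ 0, α ≥ 0, β ≥ 0, γ ≥ 0, setting N = 3^{4α} · 5^{4β} · 7^{4γ}, the number of (4,8)-regular overpartitions satisfies p̄_{4,8}(16·N·n + 2·N) ≡ 4·T(n) (mod 32), where T(n) = (−1)^m (2m+1) if n = m(m+1)/2 for some integer m ≥ 0, and T(n) = 0 if n is not a triangular number. (Equivalently, ∑_{n≥0} p̄_{4,8}(16·N·n + 2·N) q^n ≡ 4 (q;q)_∞^3 (mod 32), using Jacobi's identity (q;q)_∞^3 = ∑_{m≥0} (−1)^m (2m+1) q^{m(m+1)/2}.) -/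

import Mathlib

/-- The number of `(j,k)`-regular overpartitions of `n`: pairs `(λ, μ)` where `λ` is a
partition of some `m ≤ n` into distinct parts, `μ` is a partition of `n - m`, and no part
of `λ` or `μ` is congruent to `j` modulo `k`. -/
def regularOverpartitions (j k n : ℕ) : ℕ :=
  ∑ m ∈ Finset.range (n + 1),
    ((Nat.Partition.distincts m).filter (fun lam => ∀ i ∈ lam.parts, i % k ≠ j)).card *
    ((Finset.univ : Finset (Nat.Partition (n - m))).filter
      (fun mu => ∀ i ∈ mu.parts, i % k ≠ j)).card

open Classical in
/-- The coefficient of `q^n` in Jacobi's expansion of `(q;q)_∞^3`: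
`T n = (-1)^m * (2m+1)` if `n = m(m+1)/2` for some `m ≥ 0`, and `0` otherwise. -/
noncomputable def jacobiCoeff (n : ℕ) : ℤ :=
  if h : ∃ m : ℕ, 2 * n = m * (m + 1) then
    (-1) ^ h.choose * (2 * (h.choose : ℤ) + 1)
  else 0

/-!
Write `φ(x) = ∑ x^(k²)` and `Ψ(x) = ∑ x^(k(k+1)/2)`, both sums being over all integers `k`. By the
Jacobi triple product identity, the generating function `G` of the `(4, 8)`-regular overpartitions
is `φ(-q⁴) / (φ(-q) φ(-q⁸))`. The identity `φ(q) φ(-q) = φ(-q²)²` turns the denominator into a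
series in `q⁴`, namely `G = φ(q) φ(q²)² / (φ(-q⁴)³ φ(-q⁸))`, so the dissection
`φ(q) = φ(q⁴) + q Ψ(q⁸)` gives the coefficients of `G` along `4n + 2`: their series is
`4 (q⁴; q⁴)³ / φ(-q)⁴`. As `φ(-q) ≡ 1` modulo `2`, we have `φ(-q)⁴ ≡ 1` modulo `8`, so the
coefficients along `16n + 2` are those of `4 (q; q)³` modulo `32`. By Jacobi's identity the `n`-th
coefficient of `(q; q)³` is `χ₄(x) x` if `8n + 1 = x²`, and `0` if `8n + 1` is not a square; it is
therefore multiplied by `χ₄(M) M` when `8n + 1` is multiplied by `M²`.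

Jacobi's identity itself is the coefficient of `ε` in the triple product for
`f(-(1 - ε) q, -(1 + ε))`, where `ε² = 0`.
-/

namespace RegularOverpartition

open Finset Filter PowerSeries Topology
open scoped PowerSeries.WithPiTopology

/-! ### Triangular numbers -/

/-- The triangular number `k (k + 1) / 2`, indexed by all integers `k`. -/
def triangle (k : ℤ) : ℕ := (k * (k + 1) / 2).toNat

lemma two_mul_triangle (k : ℤ) : 2 * (triangle k : ℤ) = k * (k + 1) := by
  have even : 2 * (k * (k + 1) / 2) = k * (k + 1) :=
    Int.mul_ediv_cancel' (Int.even_mul_succ_self k).two_dvd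
  have nonneg : 0 ≤ k * (k + 1) := by
    rcases lt_or_ge k 0 with hk | hk <;> nlinarith
  rw [triangle, Int.toNat_of_nonneg (by lia), even]

lemma triangle_neg_sub_one (k : ℤ) : triangle (-k - 1) = triangle k := by
  have := two_mul_triangle k
  have := two_mul_triangle (-k - 1)
  zify
  linarith

lemma triangle_eq_triangle_sub_one_add (k : ℤ) : (triangle k : ℤ) = triangle (k - 1) + k := by
  linarith [two_mul_triangle k, two_mul_triangle (k - 1)]

lemma natAbs_le_triangle_add_one (k : ℤ) : k.natAbs ≤ triangle k + 1 := by
  have := two_mul_triangle k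
  zify
  rcases abs_cases k with ⟨hk, _⟩ | ⟨hk, _⟩ <;> rw [hk] <;> nlinarith [sq_nonneg (k + 1)]

lemma triangle_natCast_sub_one (j : ℕ) : triangle ((j : ℤ) - 1) = j.choose 2 := by
  induction j with
  | zero => rfl
  | succ j ih =>
    have := triangle_eq_triangle_sub_one_add (j : ℤ)
    push_cast
    rw [add_sub_cancel_right, Nat.choose_succ_succ', Nat.choose_one_right, ← ih]
    lia

section Finite

variable {A : Type*} [CommRing A] {a b q : A}

/-! ### Finite `q`-Pochhammer symbols and `q`-binomial coefficients -/

/-- The finite `q`-Pochhammer symbol `(a; q)_n`. -/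
def qPochhammer (a q : A) (n : ℕ) : A := ∏ i ∈ range n, (1 - a * q ^ i)

lemma qPochhammer_zero (a q : A) : qPochhammer a q 0 = 1 := rfl

lemma qPochhammer_succ (a q : A) (n : ℕ) :
    qPochhammer a q (n + 1) = qPochhammer a q n * (1 - a * q ^ n) :=
  prod_range_succ ..

lemma qPochhammer_succ' (a q : A) (n : ℕ) :
    qPochhammer a q (n + 1) = (1 - a) * qPochhammer (a * q) q n := by
  simp only [qPochhammer, prod_range_succ', pow_zero, mul_one, pow_succ']
  simp only [mul_assoc, mul_comm]

lemma qPochhammer_self_succ (q : A) (n : ℕ) :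
    qPochhammer q q (n + 1) = qPochhammer q q n * (1 - q ^ (n + 1)) := by
  rw [qPochhammer_succ, pow_succ']

lemma mul_qPochhammer_congr {u a b : A} (h : u * a = u * b) (q : A) (n : ℕ) :
    u * qPochhammer a q n = u * qPochhammer b q n := by
  induction n with
  | zero => rfl
  | succ n ih =>
    rw [qPochhammer_succ, qPochhammer_succ]
    linear_combination (1 - a * q ^ n) * ih - qPochhammer b q n * q ^ n * h

/-- The Gaussian binomial coefficient, defined by one of its two Pascal rules so that it makes
sense in every commutative ring. -/
def qBinomial (q : A) : ℕ → ℕ → A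
  | _, 0 => 1
  | 0, _ + 1 => 0
  | n + 1, k + 1 => qBinomial q n k + q ^ (k + 1) * qBinomial q n (k + 1)

lemma qBinomial_zero_right (q : A) (n : ℕ) : qBinomial q n 0 = 1 := by
  cases n <;> rfl

lemma qBinomial_succ_succ (q : A) (n k : ℕ) :
    qBinomial q (n + 1) (k + 1) = qBinomial q n k + q ^ (k + 1) * qBinomial q n (k + 1) :=
  rfl

lemma qBinomial_eq_zero_of_lt (q : A) : ∀ {n k : ℕ}, n < k → qBinomial q n k = 0
  | 0, _ + 1, _ => rfl
  | n + 1, k + 1, h => by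
    rw [qBinomial_succ_succ, qBinomial_eq_zero_of_lt q (by lia : n < k),
      qBinomial_eq_zero_of_lt q (by lia : n < k + 1), mul_zero, add_zero]

lemma qBinomial_mul_qPochhammer_mul_qPochhammer (q : A) : ∀ m n : ℕ,
    qBinomial q (m + n) m * qPochhammer q q m * qPochhammer q q n = qPochhammer q q (m + n)
  | 0, n => by simp only [qBinomial_zero_right, qPochhammer_zero, one_mul, zero_add]
  | m + 1, 0 => by
    have ih := qBinomial_mul_qPochhammer_mul_qPochhammer q m 0
    simp only [add_zero, qPochhammer_zero, mul_one] at ih ⊢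
    rw [qBinomial_succ_succ, qBinomial_eq_zero_of_lt q m.lt_succ_self, qPochhammer_self_succ]
    linear_combination (1 - q ^ (m + 1)) * ih
  | m + 1, n + 1 => by
    have ih_left := qBinomial_mul_qPochhammer_mul_qPochhammer q m (n + 1)
    have ih_right := qBinomial_mul_qPochhammer_mul_qPochhammer q (m + 1) n
    rw [show m + 1 + n = m + (n + 1) by ring] at ih_right
    rw [show m + 1 + (n + 1) = m + (n + 1) + 1 by ring, qBinomial_succ_succ,
      qPochhammer_self_succ q (m + (n + 1)), qPochhammer_self_succ q m]
    rw [qPochhammer_self_succ q m] at ih_right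
    rw [qPochhammer_self_succ q n] at ih_left ⊢
    linear_combination (1 - q ^ (m + 1)) * ih_left + q ^ (m + 1) * (1 - q ^ (n + 1)) * ih_right

lemma sum_qBinomial_succ (q : A) (n : ℕ) (f : ℕ → A) :
    ∑ j ∈ range (n + 2), f j * qBinomial q (n + 1) j =
      ∑ j ∈ range (n + 1), (f (j + 1) + q ^ j * f j) * qBinomial q n j := by
  have shift : ∑ j ∈ range (n + 1), f (j + 1) * (q ^ (j + 1) * qBinomial q n (j + 1)) + f 0 =
      ∑ j ∈ range (n + 1), q ^ j * f j * qBinomial q n j := by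
    have last := sum_range_succ (fun j ↦ q ^ j * f j * qBinomial q n j) (n + 1)
    rw [qBinomial_eq_zero_of_lt q n.lt_succ_self, mul_zero, add_zero, sum_range_succ'] at last
    rw [← last, pow_zero, qBinomial_zero_right, one_mul, mul_one]
    exact congrArg (· + f 0) (sum_congr rfl fun j _ ↦ by ring)
  simp only [sum_range_succ' _ (n + 1), qBinomial_succ_succ, qBinomial_zero_right, mul_one,
    mul_add, add_mul, sum_add_distrib]
  rw [add_assoc, shift]

theorem qPochhammer_neg_eq_sum_qBinomial (q : A) (n : ℕ) : ∀ a : A,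
    qPochhammer (-a) q n = ∑ j ∈ range (n + 1), a ^ j * q ^ j.choose 2 * qBinomial q n j := by
  induction n with
  | zero => simp [qPochhammer_zero, qBinomial_zero_right]
  | succ n ih =>
    intro a
    rw [sum_qBinomial_succ, qPochhammer_succ', neg_mul, ih, mul_sum]
    refine sum_congr rfl fun j _ ↦ ?_
    rw [Nat.choose_succ_succ', Nat.choose_one_right]
    ring

/-! ### The finite form of the Jacobi triple product -/

/-- The `k`-th term of Ramanujan's general theta function `f(a, b)`. -/
def thetaTerm (a b : A) (k : ℤ) : A := a ^ triangle k * b ^ triangle (k - 1)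

lemma thetaTerm_natCast (a b : A) (j : ℕ) :
    thetaTerm a b j = a ^ j * (a * b) ^ j.choose 2 := by
  have h := triangle_eq_triangle_sub_one_add (j : ℤ)
  rw [triangle_natCast_sub_one] at h
  rw [thetaTerm, triangle_natCast_sub_one,
    show triangle (j : ℤ) = j + j.choose 2 by lia]
  ring

lemma thetaTerm_self (x : A) (k : ℤ) : thetaTerm x x k = x ^ (k.natAbs ^ 2) := by
  have exponent : triangle k + triangle (k - 1) = k.natAbs ^ 2 := by
    have := two_mul_triangle k
    have := two_mul_triangle (k - 1)
    zify
    rw [sq_abs]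
    linarith
  rw [thetaTerm, ← pow_add, exponent]

lemma thetaTerm_mul (a b : A) (j m : ℕ) :
    thetaTerm a b (j - m) * (b * (a * b) ^ m) = (a * b) ^ j * thetaTerm a b (j - m - 1) := by
  have h₁ := triangle_eq_triangle_sub_one_add ((j : ℤ) - m)
  have h₂ := triangle_eq_triangle_sub_one_add ((j : ℤ) - m - 1)
  have ha : triangle ((j : ℤ) - m) + m = j + triangle ((j : ℤ) - m - 1) := by lia
  have hb : triangle ((j : ℤ) - m - 1) + 1 + m = j + triangle ((j : ℤ) - m - 1 - 1) := by lia
  simp only [thetaTerm]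
  calc _ = a ^ (triangle ((j : ℤ) - m) + m) * b ^ (triangle ((j : ℤ) - m - 1) + 1 + m) := by ring
    _ = _ := by rw [ha, hb]; ring

theorem qPochhammer_mul_qPochhammer_eq_sum_thetaTerm (a b : A) (n m : ℕ) :
    qPochhammer (-a) (a * b) n * qPochhammer (-b) (a * b) m =
      ∑ j ∈ range (n + m + 1), thetaTerm a b (j - m) * qBinomial (a * b) (n + m) j := by
  induction m with
  | zero =>
    simp only [qPochhammer_zero, mul_one, add_zero, Nat.cast_zero, sub_zero, thetaTerm_natCast,
      qPochhammer_neg_eq_sum_qBinomial]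
  | succ m ih =>
    rw [qPochhammer_succ, ← mul_assoc, ih, sum_mul, ← add_assoc, sum_qBinomial_succ]
    refine sum_congr rfl fun j _ ↦ ?_
    have h := thetaTerm_mul a b j m
    push_cast
    rw [show (j : ℤ) + 1 - (m + 1) = j - m by ring, show (j : ℤ) - (m + 1) = j - m - 1 by ring]
    linear_combination qBinomial (a * b) (n + m) j * h

lemma sum_range_natCast_sub_eq_sum_Icc {M : Type*} [AddCommMonoid M] (f : ℤ → M) (n : ℕ) :
    ∑ j ∈ range (n + n + 1), f (j - n) = ∑ k ∈ Icc (-n : ℤ) n, f k :=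
  sum_nbij' (fun j ↦ (j : ℤ) - n) (fun k ↦ (k + n).toNat) (by simp; lia) (by simp)
    (by simp) (by simp; lia) (by simp)

lemma pow_natAbs_sub_one_dvd_thetaTerm (a b : A) (k : ℤ) :
    (a * b) ^ (k.natAbs - 1) ∣ thetaTerm a b k := by
  have hk := natAbs_le_triangle_add_one k
  have hk' := natAbs_le_triangle_add_one (-k)
  rw [← triangle_neg_sub_one, neg_neg, Int.natAbs_neg] at hk'
  rw [mul_pow]
  exact mul_dvd_mul (pow_dvd_pow a (by lia)) (pow_dvd_pow b (by lia))

lemma pow_succ_dvd_qPochhammer_sub (q : A) {m n : ℕ} (h : m ≤ n) :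
    q ^ (m + 1) ∣ qPochhammer q q n - qPochhammer q q m := by
  induction n, h using Nat.le_induction with
  | base => simp
  | succ n hmn ih =>
    rw [qPochhammer_self_succ,
      show qPochhammer q q n * (1 - q ^ (n + 1)) - qPochhammer q q m =
        (qPochhammer q q n - qPochhammer q q m) - qPochhammer q q n * q ^ (n + 1) by ring]
    exact ih.sub ((pow_dvd_pow q (by lia)).mul_left _)

lemma pow_succ_dvd_qBinomial_mul_sub_one {j m n l : ℕ} (hunit : IsUnit (qPochhammer q q j))
    (hm : j ≤ m) (hn : j ≤ n) (hl : j ≤ l) :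
    q ^ (j + 1) ∣ qBinomial q (m + n) m * qPochhammer q q l - 1 := by
  let π := Ideal.Quotient.mk (Ideal.span {q ^ (j + 1)})
  have reduce {i : ℕ} (hi : j ≤ i) : π (qPochhammer q q i) = π (qPochhammer q q j) :=
    Ideal.Quotient.eq.2 (Ideal.mem_span_singleton.2 (pow_succ_dvd_qPochhammer_sub q hi))
  have factor := congrArg π (qBinomial_mul_qPochhammer_mul_qPochhammer q m n)
  simp only [map_mul, reduce hm, reduce hn, reduce (Nat.le_add_right_of_le hm)] at factor
  rw [← Ideal.mem_span_singleton, ← Ideal.Quotient.eq, map_mul, reduce hl, map_one]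
  exact (hunit.map π).mul_right_cancel (by rw [factor, one_mul])

lemma pow_dvd_sum_thetaTerm_sub (hunit : ∀ n, IsUnit (qPochhammer (a * b) (a * b) n)) (n : ℕ) :
    (a * b) ^ n ∣ ∑ k ∈ Icc (-n : ℤ) n, thetaTerm a b k -
      qPochhammer (-a) (a * b) n * qPochhammer (-b) (a * b) n * qPochhammer (a * b) (a * b) n := by
  rw [← sum_range_natCast_sub_eq_sum_Icc, qPochhammer_mul_qPochhammer_eq_sum_thetaTerm, sum_mul,
    ← sum_sub_distrib]
  refine dvd_sum fun j hj ↦ ?_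
  rw [mem_range] at hj
  set k : ℤ := j - n
  have head := pow_natAbs_sub_one_dvd_thetaTerm a b k
  have tail := pow_succ_dvd_qBinomial_mul_sub_one (hunit (n - k.natAbs)) (m := j)
    (n := n + n - j) (l := n) (by lia) (by lia) (by lia)
  rw [show j + (n + n - j) = n + n by lia] at tail
  rw [← dvd_neg, show -(thetaTerm a b k -
      thetaTerm a b k * qBinomial (a * b) (n + n) j * qPochhammer (a * b) (a * b) n) =
      thetaTerm a b k * (qBinomial (a * b) (n + n) j * qPochhammer (a * b) (a * b) n - 1) by ring]
  calc (a * b) ^ n ∣ (a * b) ^ (k.natAbs - 1) * (a * b) ^ (n - k.natAbs + 1) := by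
        rw [← pow_add]
        exact pow_dvd_pow _ (by lia)
    _ ∣ _ := mul_dvd_mul head tail

end Finite

section PowerSeries

variable {R : Type*} [CommRing R]

lemma X_pow_dvd_pow {q : R⟦X⟧} (hq : constantCoeff q = 0) (n : ℕ) : X ^ n ∣ q ^ n :=
  pow_dvd_pow_of_dvd (X_dvd_iff.2 hq) n

lemma constantCoeff_pow_eq_zero {q : R⟦X⟧} (hq : constantCoeff q = 0) {n : ℕ} (hn : n ≠ 0) :
    constantCoeff (q ^ n) = 0 := by
  rw [map_pow, hq, zero_pow hn]

variable [TopologicalSpace R]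

/-! ### Convergence of formal sums and products -/

lemma tendsto_zero_of_X_pow_dvd {f : ℕ → R⟦X⟧} (h : ∀ n, X ^ n ∣ f n) :
    Tendsto f atTop (𝓝 0) := by
  rw [WithPiTopology.tendsto_iff_coeff_tendsto]
  intro d
  rw [map_zero]
  exact tendsto_atTop_of_eventually_const fun n (hn : d + 1 ≤ n) ↦ X_pow_dvd_iff.1 (h n) d hn

lemma summable_of_X_pow_dvd {ι : Type*} {f : ι → R⟦X⟧} {e : ι → ℕ}
    (he : Tendsto e cofinite atTop) (h : ∀ i, X ^ e i ∣ f i) : Summable f := by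
  rw [WithPiTopology.summable_iff_summable_coeff]
  refine fun d ↦ summable_of_hasFiniteSupport ?_
  have small : {i | ¬d < e i}.Finite := eventually_cofinite.1 (he.eventually_gt_atTop d)
  exact small.subset fun i hi hlt ↦ hi (X_pow_dvd_iff.1 (h i) d hlt)

lemma multipliable_one_add_of_X_pow_dvd {f : ℕ → R⟦X⟧} (h : ∀ i, X ^ i ∣ f i) :
    Multipliable fun i ↦ 1 + f i := by
  refine WithPiTopology.multipliable_one_add_of_tendsto_order_atTop_nhds_top R
    (ENat.tendsto_nhds_top_iff_natCast_lt.2 fun n ↦ ?_)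
  filter_upwards [eventually_gt_atTop n] with i hi
  calc (n : ℕ∞) < i := mod_cast hi
    _ ≤ (f i).order := nat_le_order _ _ (X_pow_dvd_iff.1 (h i))

lemma continuous_expand (p : ℕ) (hp : p ≠ 0) : Continuous (expand p hp : R⟦X⟧ → R⟦X⟧) := by
  refine continuous_iff_continuousAt.2 fun f ↦
    (WithPiTopology.tendsto_iff_coeff_tendsto ..).2 fun d ↦ ?_
  simp only [coeff_expand]
  split_ifs
  · exact (WithPiTopology.continuous_coeff R _).continuousAt
  · exact tendsto_const_nhds

lemma hasSum_int_even_add_odd {M : Type*} [AddCommMonoid M] [TopologicalSpace M] [ContinuousAdd M]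
    {f : ℤ → M} {a b : M} (he : HasSum (fun k ↦ f (2 * k)) a)
    (ho : HasSum (fun k ↦ f (2 * k + 1)) b) : HasSum f (a + b) := by
  have inj := mul_right_injective₀ (two_ne_zero' ℤ)
  replace ho := ((add_left_injective 1).comp inj).hasSum_range_iff.2 ho
  refine (inj.hasSum_range_iff.2 he).add_isCompl ?_ ho
  simpa [Function.comp_def] using Int.isCompl_even_odd

/-- Ramanujan's general theta function `f(a, b) = ∑ a ^ (k(k+1)/2) b ^ (k(k-1)/2)`, the sum being
over all integers `k`; it converges when `a * b` has constant term `0`. -/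
noncomputable def ramanujanTheta (a b : R⟦X⟧) : R⟦X⟧ := ∑' k : ℤ, thetaTerm a b k

lemma summable_thetaTerm {a b : R⟦X⟧} (hab : constantCoeff (a * b) = 0) :
    Summable (thetaTerm a b) := by
  refine summable_of_X_pow_dvd (e := fun k : ℤ ↦ k.natAbs - 1) ?_ fun k ↦
    (X_pow_dvd_pow hab _).trans (pow_natAbs_sub_one_dvd_thetaTerm a b k)
  refine tendsto_atTop.2 fun n ↦ eventually_cofinite.2 ((Set.finite_Icc (-n : ℤ) n).subset ?_)
  intro k hk
  rw [Set.mem_ofPred_eq] at hk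
  exact Set.mem_Icc.2 (by lia)

lemma hasSum_ramanujanTheta {a b : R⟦X⟧} (hab : constantCoeff (a * b) = 0) :
    HasSum (thetaTerm a b) (ramanujanTheta a b) :=
  (summable_thetaTerm hab).hasSum

/-! ### Infinite `q`-Pochhammer symbols -/

/-- The infinite `q`-Pochhammer symbol `(a; q)_∞`, meaningful when `q` has constant term `0`,
as the product then converges. -/
noncomputable def qPochhammerInf (a q : R⟦X⟧) : R⟦X⟧ := ∏' i : ℕ, (1 - a * q ^ i)

variable {q : R⟦X⟧} (a : R⟦X⟧)

lemma multipliable_qPochhammerInf (hq : constantCoeff q = 0) :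
    Multipliable fun i : ℕ ↦ 1 - a * q ^ i := by
  simp only [sub_eq_add_neg]
  exact multipliable_one_add_of_X_pow_dvd fun i ↦ ((X_pow_dvd_pow hq i).mul_left a).neg_right

lemma tendsto_qPochhammer (hq : constantCoeff q = 0) :
    Tendsto (qPochhammer a q) atTop (𝓝 (qPochhammerInf a q)) :=
  (multipliable_qPochhammerInf a hq).hasProd.tendsto_prod_nat

lemma map_qPochhammerInf {S : Type*} [CommRing S] [TopologicalSpace S] [T2Space S]
    (f : R⟦X⟧ →+* S⟦X⟧) (hf : Continuous f) (hq : constantCoeff q = 0) :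
    f (qPochhammerInf a q) = qPochhammerInf (f a) (f q) := by
  rw [qPochhammerInf, (multipliable_qPochhammerInf a hq).map_tprod f hf]
  simp only [map_sub, map_one, map_mul, map_pow, qPochhammerInf]

variable [T2Space R]

lemma constantCoeff_qPochhammerInf (ha : constantCoeff a = 0) (hq : constantCoeff q = 0) :
    constantCoeff (qPochhammerInf a q) = 1 := by
  rw [qPochhammerInf, (multipliable_qPochhammerInf a hq).map_tprod _
    (WithPiTopology.continuous_constantCoeff R)]
  simp [ha]

lemma isUnit_qPochhammerInf {a : R⟦X⟧} (ha : constantCoeff a = 0) (hq : constantCoeff q = 0) :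
    IsUnit (qPochhammerInf a q) := by
  rw [isUnit_iff_constantCoeff, constantCoeff_qPochhammerInf a ha hq]
  exact isUnit_one

lemma expand_ramanujanTheta {a b : R⟦X⟧} (hab : constantCoeff (a * b) = 0) (p : ℕ) (hp : p ≠ 0) :
    expand p hp (ramanujanTheta a b) = ramanujanTheta (expand p hp a) (expand p hp b) := by
  rw [ramanujanTheta, (summable_thetaTerm hab).map_tsum _ (continuous_expand p hp)]
  simp [ramanujanTheta, thetaTerm]

variable [IsTopologicalRing R]

lemma qPochhammerInf_eq_one_sub_mul (hq : constantCoeff q = 0) :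
    qPochhammerInf a q = (1 - a) * qPochhammerInf (a * q) q := by
  have tail : (fun i : ℕ ↦ 1 - a * q ^ (i + 1)) = fun i ↦ 1 - a * q * q ^ i := by
    ext1 i
    ring
  have h := tprod_eq_zero_mul' (f := fun i : ℕ ↦ 1 - a * q ^ i)
    (tail ▸ multipliable_qPochhammerInf (a * q) hq)
  rw [tail, pow_zero, mul_one] at h
  exact h

lemma qPochhammerInf_mul_qPochhammerInf_neg (hq : constantCoeff q = 0) :
    qPochhammerInf a q * qPochhammerInf (-a) q = qPochhammerInf (a ^ 2) (q ^ 2) := by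
  rw [qPochhammerInf, qPochhammerInf, ← (multipliable_qPochhammerInf a hq).tprod_mul
    (multipliable_qPochhammerInf (-a) hq)]
  exact tprod_congr fun i ↦ by ring

lemma qPochhammerInf_eq_mul_sq (hq : constantCoeff q = 0) :
    qPochhammerInf a q = qPochhammerInf a (q ^ 2) * qPochhammerInf (a * q) (q ^ 2) := by
  have hq2 := constantCoeff_pow_eq_zero hq two_ne_zero
  have even : (fun i : ℕ ↦ 1 - a * q ^ (2 * i)) = fun i ↦ 1 - a * (q ^ 2) ^ i := by
    simp only [pow_mul]
  have odd : (fun i : ℕ ↦ 1 - a * q ^ (2 * i + 1)) = fun i ↦ 1 - a * q * (q ^ 2) ^ i := by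
    ext1 i
    ring
  have h := tprod_even_mul_odd (f := fun i : ℕ ↦ 1 - a * q ^ i)
    (even ▸ multipliable_qPochhammerInf a hq2) (odd ▸ multipliable_qPochhammerInf (a * q) hq2)
  rw [even, odd] at h
  exact h.symm

/-- Euler's identity behind the equinumerosity of odd and distinct partitions. -/
lemma qPochhammerInf_sq_mul_qPochhammerInf_neg (hq : constantCoeff q = 0) :
    qPochhammerInf q (q ^ 2) * qPochhammerInf (-q) q = 1 := by
  have hq2 := constantCoeff_pow_eq_zero hq two_ne_zero
  have split := qPochhammerInf_eq_mul_sq q hq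
  rw [← sq] at split
  refine (isUnit_qPochhammerInf hq2 hq2).mul_left_cancel ?_
  linear_combination qPochhammerInf_mul_qPochhammerInf_neg q hq - qPochhammerInf (-q) q * split

lemma mul_qPochhammerInf_congr {u a b : R⟦X⟧} (h : u * a = u * b) (hq : constantCoeff q = 0) :
    u * qPochhammerInf a q = u * qPochhammerInf b q := by
  refine tendsto_nhds_unique ((tendsto_qPochhammer a hq).const_mul u) ?_
  simpa only [mul_qPochhammer_congr h] using (tendsto_qPochhammer b hq).const_mul u

/-! ### The Jacobi triple product identity -/

theorem ramanujanTheta_eq_mul {a b : R⟦X⟧} (hab : constantCoeff (a * b) = 0) :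
    ramanujanTheta a b =
      qPochhammerInf (-a) (a * b) * qPochhammerInf (-b) (a * b) *
        qPochhammerInf (a * b) (a * b) := by
  have hunit (n : ℕ) : IsUnit (qPochhammer (a * b) (a * b) n) := by
    rw [isUnit_iff_constantCoeff, qPochhammer, map_prod]
    simp [hab]
  have sums : Tendsto (fun n : ℕ ↦ ∑ k ∈ Icc (-n : ℤ) n, thetaTerm a b k) atTop
      (𝓝 (ramanujanTheta a b)) :=
    (hasSum_ramanujanTheta hab).comp tendsto_Icc_neg
  have products := ((tendsto_qPochhammer (-a) hab).mul (tendsto_qPochhammer (-b) hab)).mul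
    (tendsto_qPochhammer (a * b) hab)
  have difference := tendsto_zero_of_X_pow_dvd fun n ↦
    (X_pow_dvd_pow hab n).trans (pow_dvd_sum_thetaTerm_sub hunit n)
  exact sub_eq_zero.1 (tendsto_nhds_unique (sums.sub products) difference)

end PowerSeries

section Theta

variable {R : Type*} [CommRing R] [TopologicalSpace R]

/-! ### Ramanujan's theta functions `φ` and `ψ` -/

/-- Ramanujan's theta function `φ(x) = ∑ x ^ (k²)`, the sum being over all integers `k`. -/
noncomputable def phi (x : R⟦X⟧) : R⟦X⟧ := ramanujanTheta x x

/-- Twice Ramanujan's theta function `ψ`: the sum `∑ x ^ (k(k+1)/2)` over all integers `k`,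
in which every triangular exponent occurs twice. -/
noncomputable def doublePsi (x : R⟦X⟧) : R⟦X⟧ := ramanujanTheta x 1

variable {q : R⟦X⟧}

lemma hasSum_phi (hq : constantCoeff q = 0) : HasSum (fun k : ℤ ↦ q ^ (k.natAbs ^ 2)) (phi q) := by
  have h := hasSum_ramanujanTheta (a := q) (b := q) (by rw [map_mul, hq, zero_mul])
  rwa [funext (thetaTerm_self q)] at h

lemma hasSum_doublePsi (hq : constantCoeff q = 0) :
    HasSum (fun k : ℤ ↦ q ^ triangle k) (doublePsi q) := by
  have h := hasSum_ramanujanTheta (a := q) (b := 1) (by rw [mul_one, hq])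
  exact h.congr_fun fun k ↦ by rw [thetaTerm, one_pow, mul_one]

variable [T2Space R]

lemma expand_phi (hq : constantCoeff q = 0) (p : ℕ) (hp : p ≠ 0) :
    expand p hp (phi q) = phi (expand p hp q) :=
  expand_ramanujanTheta (by rw [map_mul, hq, zero_mul]) p hp

lemma expand_doublePsi (hq : constantCoeff q = 0) (p : ℕ) (hp : p ≠ 0) :
    expand p hp (doublePsi q) = doublePsi (expand p hp q) := by
  rw [doublePsi, expand_ramanujanTheta (by rw [mul_one, hq]) p hp, map_one, doublePsi]

variable [IsTopologicalRing R]

theorem phi_eq_phi_pow_four_add (hq : constantCoeff q = 0) :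
    phi q = phi (q ^ 4) + q * doublePsi (q ^ 8) := by
  have even (k : ℤ) : (q ^ 4) ^ (k.natAbs ^ 2) = q ^ ((2 * k).natAbs ^ 2) := by
    rw [← pow_mul, Int.natAbs_mul, mul_pow]
    rfl
  have odd (k : ℤ) : q * (q ^ 8) ^ triangle k = q ^ ((2 * k + 1).natAbs ^ 2) := by
    have exponent : 1 + 8 * triangle k = (2 * k + 1).natAbs ^ 2 := by
      zify
      rw [sq_abs]
      linear_combination 4 * two_mul_triangle k
    rw [← exponent, pow_add, pow_one, pow_mul]
  have hasSum_even := hasSum_phi (constantCoeff_pow_eq_zero hq four_ne_zero)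
  have hasSum_odd :=
    (hasSum_doublePsi (constantCoeff_pow_eq_zero hq (by norm_num : 8 ≠ 0))).mul_left q
  simp only [even] at hasSum_even
  simp only [odd] at hasSum_odd
  exact (hasSum_phi hq).unique (hasSum_int_even_add_odd hasSum_even hasSum_odd)

lemma two_dvd_phi_sub_one (hq : constantCoeff q = 0) : 2 ∣ phi q - 1 := by
  have summable : Summable fun n : ℕ ↦ q ^ (n ^ 2) :=
    summable_of_X_pow_dvd (e := (· ^ 2))
      (by rw [Nat.cofinite_eq_atTop]; exact tendsto_pow_atTop two_ne_zero)
      fun n ↦ X_pow_dvd_pow hq (n ^ 2)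
  have paired := (hasSum_phi hq).nat_add_neg
  simp only [Int.natAbs_neg, Int.natAbs_natCast, ← two_mul, Int.natAbs_zero] at paired
  have h := paired.unique (summable.hasSum.mul_left 2)
  exact ⟨∑' n : ℕ, q ^ (n ^ 2) - 1, by linear_combination h⟩

lemma eight_dvd_phi_pow_four_sub_one (hq : constantCoeff q = 0) : 8 ∣ phi q ^ 4 - 1 := by
  obtain ⟨K, hK⟩ := two_dvd_phi_sub_one hq
  exact ⟨K + 3 * K ^ 2 + 4 * K ^ 3 + 2 * K ^ 4, by rw [sub_eq_iff_eq_add.1 hK]; ring⟩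

lemma phi_neg_eq_mul (hq : constantCoeff q = 0) :
    phi (-q) = qPochhammerInf q (q ^ 2) ^ 2 * qPochhammerInf (q ^ 2) (q ^ 2) := by
  rw [phi, ramanujanTheta_eq_mul (by simp [hq]), neg_neg, neg_mul_neg, ← sq, ← sq]

lemma isUnit_phi (hq : constantCoeff q = 0) : IsUnit (phi q) := by
  have h : constantCoeff (q * q) = 0 := by rw [map_mul, hq, zero_mul]
  have hneg : constantCoeff (-q) = 0 := by rw [map_neg, hq, neg_zero]
  rw [phi, ramanujanTheta_eq_mul h]
  exact ((isUnit_qPochhammerInf hneg h).mul (isUnit_qPochhammerInf hneg h)).mul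
    (isUnit_qPochhammerInf h h)

/-- An identity of Gauss. -/
lemma phi_neg_mul_qPochhammerInf_neg (hq : constantCoeff q = 0) :
    phi (-q) * qPochhammerInf (-q) q = qPochhammerInf q q := by
  have split := qPochhammerInf_eq_mul_sq q hq
  rw [← sq] at split
  rw [phi_neg_eq_mul hq, split]
  linear_combination qPochhammerInf q (q ^ 2) * qPochhammerInf (q ^ 2) (q ^ 2) *
    qPochhammerInf_sq_mul_qPochhammerInf_neg hq

lemma doublePsi_eq_mul (hq : constantCoeff q = 0) :
    doublePsi q = 2 * qPochhammerInf (-q) q ^ 2 * qPochhammerInf q q := by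
  have head := qPochhammerInf_eq_one_sub_mul (-1) hq
  rw [neg_one_mul, sub_neg_eq_add, one_add_one_eq_two] at head
  rw [doublePsi, ramanujanTheta_eq_mul (by rwa [mul_one]), mul_one, head]
  ring

theorem phi_neg_sq_mul_doublePsi (hq : constantCoeff q = 0) :
    phi (-q) ^ 2 * doublePsi q = 2 * qPochhammerInf q q ^ 3 := by
  rw [doublePsi_eq_mul hq, ← phi_neg_mul_qPochhammerInf_neg hq]
  ring

theorem phi_mul_phi_neg (hq : constantCoeff q = 0) : phi q * phi (-q) = phi (-q ^ 2) ^ 2 := by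
  have hneg : constantCoeff (-q) = 0 := by rw [map_neg, hq, neg_zero]
  have hq2 := constantCoeff_pow_eq_zero hq two_ne_zero
  have hphi := phi_neg_eq_mul hneg
  have double := qPochhammerInf_mul_qPochhammerInf_neg q hq2
  have split := qPochhammerInf_eq_mul_sq (q ^ 2) hq2
  rw [neg_neg, neg_sq] at hphi
  rw [← sq] at split
  calc phi q * phi (-q)
      = (qPochhammerInf q (q ^ 2) * qPochhammerInf (-q) (q ^ 2)) ^ 2 *
          qPochhammerInf (q ^ 2) (q ^ 2) ^ 2 := by rw [hphi, phi_neg_eq_mul hq]; ring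
    _ = phi (-q ^ 2) ^ 2 := by rw [double, split, phi_neg_eq_mul hq2]; ring

end Theta

/-! ### Jacobi's identity for the cube of Euler's product -/

lemma jacobiCoeff_of_two_mul_eq {n m : ℕ} (h : 2 * n = m * (m + 1)) :
    jacobiCoeff n = (-1) ^ m * (2 * m + 1) := by
  have hex : ∃ m : ℕ, 2 * n = m * (m + 1) := ⟨m, h⟩
  have choose_eq : hex.choose = m := by nlinarith [hex.choose_spec]
  rw [jacobiCoeff, dif_pos hex, choose_eq]

lemma jacobiCoeff_of_forall_two_mul_ne {n : ℕ} (h : ∀ m : ℕ, 2 * n ≠ m * (m + 1)) :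
    jacobiCoeff n = 0 :=
  dif_neg (not_exists.2 h)

section SquareZero

variable {R : Type*} [CommRing R]

lemma mul_pow_congr {u a b : R} (h : u * a = u * b) (n : ℕ) : u * a ^ n = u * b ^ n := by
  induction n with
  | zero => simp only [pow_zero]
  | succ n ih => linear_combination a * ih + b ^ n * h

lemma one_add_pow_of_mul_self_eq_zero {u : R} (hu : u * u = 0) (n : ℕ) :
    (1 + u) ^ n = 1 + n * u := by
  induction n with
  | zero => simp
  | succ n ih =>
    push_cast
    linear_combination (1 + u) * ih + n * hu

lemma thetaTerm_add_thetaTerm_of_mul_self_eq_zero {u : R} (hu : u * u = 0) (q : R) (n : ℕ) :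
    thetaTerm (-((1 - u) * q)) (-(1 + u)) n + thetaTerm (-((1 - u) * q)) (-(1 + u)) (-(n + 1)) =
      -u * ((-1) ^ n * (2 * n + 1) * q ^ triangle n) := by
  obtain ⟨s, hs⟩ : ∃ s, triangle ((n : ℤ) - 1) = s := ⟨_, rfl⟩
  have hn : triangle n = s + n := by
    have := triangle_eq_triangle_sub_one_add n
    lia
  have hneg : triangle (-((n : ℤ) + 1)) = s + n := by
    rw [neg_add', triangle_neg_sub_one, hn]
  have hneg' : triangle (-((n : ℤ) + 1) - 1) = s + (2 * n + 1) := by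
    rw [triangle_neg_sub_one]
    have := triangle_eq_triangle_sub_one_add ((n : ℤ) + 1)
    rw [add_sub_cancel_right] at this
    lia
  have odd_power : (-(1 + u)) ^ (2 * n + 1) = -(1 + (2 * n + 1) * u) := by
    rw [Odd.neg_pow ⟨n, rfl⟩, one_add_pow_of_mul_self_eq_zero hu]
    push_cast
    rfl
  have left := mul_pow_congr (u := u) (a := -((1 - u) * q)) (b := -q)
    (by linear_combination q * hu) (s + n)
  have right := mul_pow_congr (u := u) (a := -(1 + u)) (b := -1) (by linear_combination -hu) s
  have sign : (-1 : R) ^ s * (-1) ^ (s + n) = (-1) ^ n := by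
    rw [← pow_add, ← add_assoc, pow_add, Even.neg_one_pow ⟨s, rfl⟩, one_mul]
  simp only [thetaTerm, hn, hs, hneg, hneg', pow_add _ s (2 * n + 1), odd_power]
  rw [neg_pow q] at left
  linear_combination -(2 * n + 1) * ((-(1 + u)) ^ s * left + (-1) ^ (s + n) * q ^ (s + n) * right
    + u * q ^ (s + n) * sign)

variable [TopologicalSpace R] [IsTopologicalRing R] [T2Space R] {q u : R⟦X⟧}

lemma ramanujanTheta_of_mul_self_eq_zero (hu : u * u = 0) (hq : constantCoeff q = 0) :
    ramanujanTheta (-((1 - u) * q)) (-(1 + u)) = -u * qPochhammerInf q q ^ 3 := by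
  have hprod : -((1 - u) * q) * -(1 + u) = q := by linear_combination -q * hu
  have left := mul_qPochhammerInf_congr (u := u) (a := (1 - u) * q) (b := q)
    (by linear_combination -q * hu) hq
  have right := mul_qPochhammerInf_congr (u := u) (a := (1 + u) * q) (b := q)
    (by linear_combination q * hu) hq
  rw [ramanujanTheta_eq_mul (by rw [hprod, hq]), hprod, neg_neg, neg_neg,
    qPochhammerInf_eq_one_sub_mul (1 + u) hq]
  linear_combination -qPochhammerInf q q * (qPochhammerInf ((1 + u) * q) q * left +
    qPochhammerInf q q * right)

lemma hasSum_mul_qPochhammerInf_cube (hu : u * u = 0) (hq : constantCoeff q = 0) :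
    HasSum (fun n : ℕ ↦ u * ((-1) ^ n * (2 * n + 1) * q ^ triangle n))
      (u * qPochhammerInf q q ^ 3) := by
  have hprod : -((1 - u) * q) * -(1 + u) = q := by linear_combination -q * hu
  have bilateral := hasSum_ramanujanTheta (a := -((1 - u) * q)) (b := -(1 + u)) (by rwa [hprod])
  have paired := bilateral.nat_add_neg_add_one
  simp only [ramanujanTheta_of_mul_self_eq_zero hu hq,
    thetaTerm_add_thetaTerm_of_mul_self_eq_zero hu] at paired
  simpa only [neg_mul, neg_neg] using paired.neg

end SquareZero

section DualNumber

open scoped DualNumber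

variable {R : Type*} [CommRing R] [TopologicalSpace R]

lemma continuous_map_fstHom :
    Continuous (map (TrivSqZeroExt.fstHom R R R : R[ε] →+* R) : R[ε]⟦X⟧ → R⟦X⟧) := by
  refine continuous_iff_continuousAt.2 fun f ↦
    (WithPiTopology.tendsto_iff_coeff_tendsto ..).2 fun d ↦ ?_
  simp only [coeff_map]
  exact (TrivSqZeroExt.continuous_fst.comp
    (WithPiTopology.continuous_coeff R[ε] d)).continuousAt

lemma hasSum_map_fstHom_of_hasSum_eps_mul {ι : Type*} {f : ι → R[ε]⟦X⟧} {g : R[ε]⟦X⟧}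
    (h : HasSum (fun i ↦ C ε * f i) (C ε * g)) :
    HasSum (fun i ↦ map (TrivSqZeroExt.fstHom R R R : R[ε] →+* R) (f i))
      (map (TrivSqZeroExt.fstHom R R R : R[ε] →+* R) g) := by
  rw [WithPiTopology.hasSum_iff_hasSum_coeff] at h ⊢
  intro d
  simpa using TrivSqZeroExt.hasSum_snd _ (h d)

variable [IsTopologicalRing R] [T2Space R]

theorem hasSum_qPochhammerInf_X_cube :
    HasSum (fun n : ℕ ↦ (-1) ^ n * (2 * n + 1) * (X : R⟦X⟧) ^ triangle n)
      (qPochhammerInf X X ^ 3) := by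
  have eps_sq : (C ε * C ε : R[ε]⟦X⟧) = 0 := by rw [← map_mul, DualNumber.eps_mul_eps, map_zero]
  have hX : constantCoeff (X : R[ε]⟦X⟧) = 0 := constantCoeff_X
  have euler_product := map_qPochhammerInf X (map (TrivSqZeroExt.fstHom R R R : R[ε] →+* R))
    continuous_map_fstHom hX
  have lifted := hasSum_mul_qPochhammerInf_cube eps_sq hX
  have h := hasSum_map_fstHom_of_hasSum_eps_mul lifted
  simp only [map_mul, map_pow, map_neg, map_one, map_add, map_ofNat, map_natCast, map_X,
    euler_product] at h
  exact h

end DualNumber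

theorem coeff_qPochhammerInf_X_cube (n : ℕ) :
    coeff n (qPochhammerInf X X ^ 3 : ℤ⟦X⟧) = jacobiCoeff n := by
  have expansion := (WithPiTopology.hasSum_iff_hasSum_coeff ℤ).1 hasSum_qPochhammerInf_X_cube n
  have term (m : ℕ) : coeff n ((-1) ^ m * (2 * (m : ℤ⟦X⟧) + 1) * X ^ triangle m) =
      if 2 * n = m * (m + 1) then (-1) ^ m * (2 * (m : ℤ) + 1) else 0 := by
    have monomial_form : ((-1) ^ m * (2 * (m : ℤ⟦X⟧) + 1) * X ^ triangle m) =
        C ((-1) ^ m * (2 * (m : ℤ) + 1)) * X ^ triangle m := by simp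
    have index : n = triangle m ↔ 2 * n = m * (m + 1) := by
      have := two_mul_triangle m
      lia
    simp only [monomial_form, coeff_C_mul_X_pow, index]
  simp only [term] at expansion
  by_cases htri : ∃ m : ℕ, 2 * n = m * (m + 1)
  · obtain ⟨m, hm⟩ := htri
    have other (l : ℕ) (hl : l ≠ m) : ¬2 * n = l * (l + 1) := fun h ↦ hl (by nlinarith)
    rw [jacobiCoeff_of_two_mul_eq hm]
    refine expansion.unique ?_
    simpa only [if_pos hm] using hasSum_single m fun l hl ↦ if_neg (other l hl)
  · push Not at htri
    rw [jacobiCoeff_of_forall_two_mul_ne htri]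
    exact expansion.unique (by simpa only [if_neg (htri _)] using hasSum_zero)

/-! ### The generating function of regular overpartitions -/

section ResidueClass

variable {R : Type*} [CommRing R] [TopologicalSpace R] {q : R⟦X⟧} (a : R⟦X⟧)

lemma multipliable_ite_one_sub_mul_pow (hq : constantCoeff q = 0) (p : ℕ → Prop) [DecidablePred p] :
    Multipliable fun i ↦ if p i then 1 - a * q ^ i else 1 := by
  have hdvd (i : ℕ) : X ^ i ∣ if p i then -(a * q ^ i) else 0 := by
    split_ifs
    exacts [((X_pow_dvd_pow hq i).mul_left a).neg_right, dvd_zero _]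
  exact (multipliable_one_add_of_X_pow_dvd hdvd).congr fun i ↦ by split_ifs <;> ring

lemma tprod_ite_mod_eq {k r : ℕ} (hr : r < k) :
    ∏' i : ℕ, (if i % k = r then 1 - a * q ^ i else 1) = qPochhammerInf (a * q ^ r) (q ^ k) := by
  have inj : Function.Injective fun i : ℕ ↦ r + k * i :=
    (add_right_injective r).comp (mul_right_injective₀ (by lia))
  have support : Function.mulSupport (fun i ↦ if i % k = r then 1 - a * q ^ i else 1) ⊆
      Set.range fun i : ℕ ↦ r + k * i := fun i hi ↦
    ⟨i / k, (ite_ne_right_iff.1 hi).1 ▸ Nat.mod_add_div i k⟩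
  rw [← inj.tprod_eq support, qPochhammerInf]
  refine tprod_congr fun i ↦ ?_
  rw [if_pos (by rw [Nat.add_mul_mod_self_left, Nat.mod_eq_of_lt hr]), pow_add, pow_mul, mul_assoc]

variable [T2Space R] [IsTopologicalRing R]

lemma tprod_ite_mod_ne_mul (hq : constantCoeff q = 0) {k r : ℕ} (hr : r < k) :
    (∏' i : ℕ, if i % k ≠ r then 1 - a * q ^ i else 1) * qPochhammerInf (a * q ^ r) (q ^ k) =
      qPochhammerInf a q := by
  rw [← tprod_ite_mod_eq a hr, ← (multipliable_ite_one_sub_mul_pow a hq _).tprod_mul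
    (multipliable_ite_one_sub_mul_pow a hq _), qPochhammerInf]
  exact tprod_congr fun i ↦ by by_cases h : i % k = r <;> simp [h]

end ResidueClass

section GeneratingFunction

variable (p : ℕ → Prop) [DecidablePred p]

lemma genFun_eq_mk_card_distincts :
    Nat.Partition.genFun (fun i c ↦ if p i ∧ c < 2 then (1 : ℤ) else 0) =
      mk fun n ↦ (#{lam ∈ Nat.Partition.distincts n | ∀ i ∈ lam.parts, p i} : ℤ) := by
  ext n
  rw [Nat.Partition.coeff_genFun, coeff_mk, ← Nat.Partition.countRestricted_two,
    Nat.Partition.countRestricted, filter_filter, card_filter, Nat.cast_sum]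
  refine sum_congr rfl fun lam _ ↦ ?_
  rw [Finsupp.prod, prod_boole]
  simp only [Multiset.toFinsupp_support, Multiset.mem_toFinset, Multiset.toFinsupp_apply,
    Nat.cast_ite, Nat.cast_one, Nat.cast_zero, forall₂_and, and_comm]

lemma mk_card_distincts_eq_tprod :
    (mk fun n ↦ (#{lam ∈ Nat.Partition.distincts n | ∀ i ∈ lam.parts, p i} : ℤ)) =
      ∏' i : ℕ, if p (i + 1) then 1 - -X * X ^ i else 1 := by
  rw [← genFun_eq_mk_card_distincts, ← (Nat.Partition.hasProd_genFun _).tprod_eq]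
  refine tprod_congr fun i ↦ ?_
  rw [tsum_eq_single 0 fun j hj ↦ by rw [if_neg (by lia), smul_eq_C_mul, map_zero, zero_mul],
    smul_eq_C_mul]
  by_cases h : p (i + 1) <;> simp [h, pow_succ']

lemma mk_card_restricted_mul_tprod :
    (mk fun n ↦ (#(Nat.Partition.restricted n p) : ℤ)) *
      ∏' i : ℕ, (if p (i + 1) then 1 - X * X ^ i else 1) = 1 := by
  have geometric := Nat.Partition.hasProd_powerSeriesMk_card_restricted ℤ p
  rw [← geometric.tprod_eq, ← geometric.multipliable.tprod_mul
    (multipliable_ite_one_sub_mul_pow X constantCoeff_X fun i ↦ p (i + 1))]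
  refine (tprod_congr fun i ↦ ?_).trans tprod_one
  split_ifs
  · simp_rw [← pow_succ', pow_mul]
    exact WithPiTopology.tsum_pow_mul_one_sub_of_constantCoeff_eq_zero (by simp)
  · exact one_mul 1

end GeneratingFunction

/-- The generating function of the `(j, k)`-regular overpartitions. -/
def overpartitionSeries (j k : ℕ) : ℤ⟦X⟧ := mk fun n ↦ (regularOverpartitions j k n : ℤ)

lemma overpartitionSeries_eq_mul (j k : ℕ) :
    overpartitionSeries j k =
      (mk fun n ↦ (#{lam ∈ Nat.Partition.distincts n | ∀ i ∈ lam.parts, i % k ≠ j} : ℤ)) *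
        mk fun n ↦ (#(Nat.Partition.restricted n (· % k ≠ j)) : ℤ) := by
  ext n
  rw [coeff_mul, Nat.sum_antidiagonal_eq_sum_range_succ_mk, overpartitionSeries, coeff_mk,
    regularOverpartitions, Nat.cast_sum]
  simp only [coeff_mk, Nat.cast_mul, Nat.Partition.restricted]

lemma overpartitionSeries_mul_mul {j k : ℕ} (hj : 0 < j) (hjk : j < k) :
    overpartitionSeries j k * qPochhammerInf X X * qPochhammerInf (-X ^ j) (X ^ k) =
      qPochhammerInf (-X) X * qPochhammerInf (X ^ j) (X ^ k) := by
  obtain ⟨r, rfl⟩ := Nat.exists_eq_add_one.2 hj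
  have hr : r < k := by lia
  have shift (i : ℕ) : (i + 1) % k ≠ r + 1 ↔ i % k ≠ r := by
    have cancel : (i + 1) % k = (r + 1) % k ↔ i % k = r % k :=
      ⟨Nat.ModEq.add_right_cancel' 1, Nat.ModEq.add_right 1⟩
    rw [Nat.mod_eq_of_lt hjk, Nat.mod_eq_of_lt hr] at cancel
    exact not_congr cancel
  have overlined := mk_card_distincts_eq_tprod (· % k ≠ r + 1)
  have plain := mk_card_restricted_mul_tprod (· % k ≠ r + 1)
  have split (a : ℤ⟦X⟧) := tprod_ite_mod_ne_mul a constantCoeff_X hr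
  have splitNeg := split (-X)
  have splitPos := split X
  simp only [shift] at overlined plain
  rw [neg_mul, ← pow_succ'] at splitNeg
  rw [← pow_succ'] at splitPos
  rw [overpartitionSeries_eq_mul, overlined, ← splitPos, ← splitNeg]
  linear_combination (∏' i : ℕ, if i % k ≠ r then 1 - -X * X ^ i else 1) *
    qPochhammerInf (X ^ (r + 1)) (X ^ k) * qPochhammerInf (-X ^ (r + 1)) (X ^ k) * plain

theorem overpartitionSeries_mul_phi_neg_mul {j : ℕ} (hj : 0 < j) :
    overpartitionSeries j (2 * j) * phi (-X) * phi (-X ^ (2 * j)) = phi (-X ^ j) := by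
  have hXj : constantCoeff (X ^ j : ℤ⟦X⟧) = 0 :=
    constantCoeff_pow_eq_zero constantCoeff_X hj.ne'
  have hXj2 := constantCoeff_pow_eq_zero hXj two_ne_zero
  have product := overpartitionSeries_mul_mul hj (by lia : j < 2 * j)
  have gauss := phi_neg_mul_qPochhammerInf_neg (R := ℤ) constantCoeff_X
  have gaussPow := phi_neg_eq_mul hXj2
  have double := qPochhammerInf_mul_qPochhammerInf_neg (X ^ j) hXj2
  have split := qPochhammerInf_eq_mul_sq ((X ^ j) ^ 2) hXj2
  rw [← sq] at split
  rw [mul_comm 2 j, pow_mul] at product ⊢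
  have hu := isUnit_qPochhammerInf (a := -X) (by simp) (constantCoeff_X (R := ℤ))
  have hv := isUnit_qPochhammerInf (a := -X ^ j) (by rw [map_neg, hXj, neg_zero]) hXj2
  refine (hu.mul hv).mul_left_cancel ?_
  rw [gaussPow, phi_neg_eq_mul hXj, split, ← double]
  rw [← gauss] at product
  linear_combination (qPochhammerInf (X ^ j) ((X ^ j) ^ 2) *
    qPochhammerInf (-X ^ j) ((X ^ j) ^ 2)) ^ 2 *
    qPochhammerInf (((X ^ j) ^ 2) ^ 2) (((X ^ j) ^ 2) ^ 2) * product

/-! ### Multisection of power series -/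

section Multisection

variable {R : Type*} [CommRing R]

/-- The series `∑ f_{dn+r} X ^ n` formed by the coefficients of `f` along the arithmetic
progression `r, r + d, r + 2d, …`. -/
noncomputable def multisection (d r : ℕ) : R⟦X⟧ →ₗ[R] R⟦X⟧ where
  toFun f := mk fun n ↦ coeff (d * n + r) f
  map_add' f g := by ext; simp
  map_smul' c f := by ext; simp

lemma coeff_multisection (d r n : ℕ) (f : R⟦X⟧) :
    coeff n (multisection d r f) = coeff (d * n + r) f :=
  coeff_mk n fun n ↦ coeff (d * n + r) f

variable {d : ℕ} (hd : d ≠ 0)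

lemma coeff_X_pow_mul_expand {s : ℕ} (hs : s < d) (n : ℕ) (f : R⟦X⟧) :
    coeff n (X ^ s * expand d hd f) = if n % d = s then coeff (n / d) f else 0 := by
  split_ifs with hmod
  · conv_lhs => rw [← Nat.div_add_mod n d, hmod, coeff_X_pow_mul, coeff_expand_mul]
  · rw [coeff_X_pow_mul']
    split_ifs with hsn
    · refine coeff_expand_of_not_dvd d hd f fun hdvd ↦ hmod ?_
      have congruent : s % d = n % d := (Nat.modEq_iff_dvd' hsn).2 hdvd
      rw [← congruent, Nat.mod_eq_of_lt hs]
    · rfl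

lemma multisection_X_pow_mul_expand {r s : ℕ} (hr : r < d) (hs : s < d) (f : R⟦X⟧) :
    multisection d r (X ^ s * expand d hd f) = if r = s then f else 0 := by
  ext n
  rw [coeff_multisection, coeff_X_pow_mul_expand hd hs, Nat.mul_add_mod, Nat.mod_eq_of_lt hr,
    Nat.mul_add_div (Nat.pos_of_ne_zero hd), Nat.div_eq_of_lt hr, add_zero]
  split_ifs <;> simp

lemma sum_X_pow_mul_expand_multisection (f : R⟦X⟧) :
    ∑ s ∈ range d, X ^ s * expand d hd (multisection d s f) = f := by
  ext n
  have term : ∀ s ∈ range d, coeff n (X ^ s * expand d hd (multisection d s f)) =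
      if n % d = s then coeff n f else 0 := fun s hs ↦ by
    rw [coeff_X_pow_mul_expand hd (mem_range.1 hs), coeff_multisection]
    split_ifs with hmod
    · rw [← hmod, Nat.div_add_mod]
    · rfl
  rw [map_sum, sum_congr rfl term, sum_ite_eq,
    if_pos (mem_range.2 (Nat.mod_lt n (Nat.pos_of_ne_zero hd)))]

lemma multisection_mul_expand {r : ℕ} (hr : r < d) (f g : R⟦X⟧) :
    multisection d r (f * expand d hd g) = multisection d r f * g := by
  have term : ∀ s ∈ range d, multisection d r
      (X ^ s * expand d hd (multisection d s f) * expand d hd g) =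
        if r = s then multisection d s f * g else 0 := fun s hs ↦ by
    rw [mul_assoc, ← map_mul, multisection_X_pow_mul_expand hd hr (mem_range.1 hs)]
  conv_lhs => rw [← sum_X_pow_mul_expand_multisection hd f, sum_mul, map_sum]
  rw [sum_congr rfl term, sum_ite_eq, if_pos (mem_range.2 hr)]

end Multisection

/-! ### The coefficients in the progression `16n + 2` -/

theorem overpartitionSeries_mul_phi_neg_cube :
    overpartitionSeries 4 8 * (phi (-X ^ 4) ^ 3 * phi (-X ^ 8)) = phi X * phi (X ^ 2) ^ 2 := by
  have hX : constantCoeff (X : ℤ⟦X⟧) = 0 := constantCoeff_X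
  have quotient : overpartitionSeries 4 8 * phi (-X) * phi (-X ^ 8) = phi (-X ^ 4) :=
    overpartitionSeries_mul_phi_neg_mul four_pos
  have fold := phi_mul_phi_neg hX
  have foldSq := phi_mul_phi_neg (constantCoeff_pow_eq_zero hX two_ne_zero)
  rw [← pow_mul] at foldSq
  have hunit : IsUnit (phi (-X ^ 4 : ℤ⟦X⟧)) := isUnit_phi (by simp)
  refine hunit.mul_left_cancel ?_
  linear_combination phi X * phi (X ^ 2) ^ 2 * quotient -
    overpartitionSeries 4 8 * phi (X ^ 2) ^ 2 * phi (-X ^ 8) * fold -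
    overpartitionSeries 4 8 * phi (-X ^ 8) *
      (phi (X ^ 2) * phi (-X ^ 2) + phi (-X ^ 4) ^ 2) * foldSq

lemma multisection_phi_mul_phi_sq :
    multisection 4 2 (phi X * phi (X ^ 2) ^ 2 : ℤ⟦X⟧) =
      2 * phi X * phi (X ^ 2) * doublePsi (X ^ 4) := by
  have hX : constantCoeff (X : ℤ⟦X⟧) = 0 := constantCoeff_X
  have hX2 := constantCoeff_pow_eq_zero hX two_ne_zero
  have hX4 := constantCoeff_pow_eq_zero hX four_ne_zero
  have dissect : phi (X : ℤ⟦X⟧) =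
      expand 4 four_ne_zero (phi X) + X * expand 4 four_ne_zero (doublePsi (X ^ 2)) := by
    rw [expand_phi hX, expand_doublePsi hX2, map_pow, expand_X, ← pow_mul]
    exact phi_eq_phi_pow_four_add hX
  have dissectSq : phi (X ^ 2 : ℤ⟦X⟧) =
      expand 4 four_ne_zero (phi (X ^ 2)) + X ^ 2 * expand 4 four_ne_zero (doublePsi (X ^ 4)) := by
    rw [expand_phi hX2, expand_doublePsi hX4, map_pow, map_pow, expand_X, pow_right_comm,
      ← pow_mul X 4 4, pow_mul X 2 8]
    exact phi_eq_phi_pow_four_add hX2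
  set a : ℤ⟦X⟧ := phi X
  set b : ℤ⟦X⟧ := doublePsi (X ^ 2)
  set c : ℤ⟦X⟧ := phi (X ^ 2)
  set d : ℤ⟦X⟧ := doublePsi (X ^ 4)
  have key : a * c ^ 2 = X ^ 0 * expand 4 four_ne_zero (a * (c ^ 2 + X * d ^ 2)) +
      X ^ 1 * expand 4 four_ne_zero (b * (c ^ 2 + X * d ^ 2)) +
      X ^ 2 * expand 4 four_ne_zero (2 * a * c * d) +
      X ^ 3 * expand 4 four_ne_zero (2 * b * c * d) := by
    nth_rw 1 [dissect, dissectSq]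
    simp only [map_mul, map_add, map_pow, expand_X, map_ofNat]
    ring
  rw [key, map_add, map_add, map_add]
  simp only [multisection_X_pow_mul_expand, Nat.reduceLT, Nat.reduceEqDiff, ↓reduceIte]
  ring

theorem multisection_overpartitionSeries_mul_phi_neg_pow_four :
    multisection 4 2 (overpartitionSeries 4 8) * phi (-X) ^ 4 =
      4 * qPochhammerInf (X ^ 4) (X ^ 4) ^ 3 := by
  have hX : constantCoeff (X : ℤ⟦X⟧) = 0 := constantCoeff_X
  have hX2 := constantCoeff_pow_eq_zero hX two_ne_zero
  have hX4 := constantCoeff_pow_eq_zero hX four_ne_zero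
  have expandPhi : expand 4 four_ne_zero (phi (-X) ^ 3 * phi (-X ^ 2) : ℤ⟦X⟧) =
      phi (-X ^ 4) ^ 3 * phi (-X ^ 8) := by
    rw [map_mul, map_pow, expand_phi (by simp), expand_phi (by simp), map_neg, map_neg, map_pow,
      expand_X, ← pow_mul]
  have section_eq := congrArg (multisection 4 2) overpartitionSeries_mul_phi_neg_cube
  rw [← expandPhi, multisection_mul_expand four_ne_zero (by norm_num),
    multisection_phi_mul_phi_sq] at section_eq
  have fold := phi_mul_phi_neg hX
  have foldSq := phi_mul_phi_neg hX2
  have jacobi := phi_neg_sq_mul_doublePsi hX4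
  rw [← pow_mul] at foldSq
  have hunit : IsUnit (phi (-X ^ 2 : ℤ⟦X⟧)) := isUnit_phi (by simp)
  refine hunit.mul_left_cancel ?_
  linear_combination phi (-X) * section_eq + 2 * phi (X ^ 2) * doublePsi (X ^ 4) * fold +
    2 * phi (-X ^ 2) * doublePsi (X ^ 4) * foldSq + 2 * phi (-X ^ 2) * jacobi

lemma dvd_multisection_overpartitionSeries_sub :
    32 ∣ multisection 4 2 (overpartitionSeries 4 8) - 4 * qPochhammerInf (X ^ 4) (X ^ 4) ^ 3 := by
  have key := multisection_overpartitionSeries_mul_phi_neg_pow_four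
  obtain ⟨K, hK⟩ := eight_dvd_phi_pow_four_sub_one (q := (-X : ℤ⟦X⟧)) (by simp)
  rw [sub_eq_iff_eq_add.1 hK] at key
  set H := multisection 4 2 (overpartitionSeries 4 8)
  set P : ℤ⟦X⟧ := qPochhammerInf (X ^ 4) (X ^ 4) ^ 3
  exact ⟨-K * (P - 2 * K * H), by linear_combination (1 - 8 * K) * key⟩

theorem regularOverpartitions_sixteen_mul_add_two (n : ℕ) :
    (regularOverpartitions 4 8 (16 * n + 2) : ℤ) ≡ 4 * jacobiCoeff n [ZMOD 32] := by
  have expandCube : expand 4 four_ne_zero (qPochhammerInf X X ^ 3 : ℤ⟦X⟧) =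
      qPochhammerInf (X ^ 4) (X ^ 4) ^ 3 := by
    rw [map_pow, ← expand_X 4 four_ne_zero]
    exact congrArg (· ^ 3) (map_qPochhammerInf X (expand 4 four_ne_zero).toRingHom
      (continuous_expand 4 four_ne_zero) constantCoeff_X)
  obtain ⟨K, hK⟩ := dvd_multisection_overpartitionSeries_sub
  have coeffs := congrArg (coeff (4 * n)) hK
  rw [← expandCube, map_sub, coeff_multisection, overpartitionSeries, coeff_mk,
    ← map_ofNat (C (R := ℤ)) 4, ← map_ofNat (C (R := ℤ)) 32, coeff_C_mul, coeff_C_mul,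
    coeff_expand_mul, coeff_qPochhammerInf_X_cube, ← mul_assoc] at coeffs
  exact (Int.modEq_iff_dvd.2 ⟨_, coeffs⟩).symm

/-! ### Dilation of Jacobi's coefficients -/

lemma jacobiCoeff_of_eq_sq {n x : ℕ} (h : 8 * n + 1 = x ^ 2) :
    jacobiCoeff n = ZMod.χ₄ x * x := by
  have hx : Odd x := (Nat.odd_pow_iff two_ne_zero).1 ⟨4 * n, by lia⟩
  obtain ⟨m, rfl⟩ := hx
  have triangular : 2 * n = m * (m + 1) := by linarith
  rw [jacobiCoeff_of_two_mul_eq triangular, ZMod.χ₄_eq_neg_one_pow (by lia),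
    (by lia : (2 * m + 1) / 2 = m)]
  push_cast
  rfl

lemma jacobiCoeff_of_not_isSquare {n : ℕ} (h : ¬IsSquare (8 * n + 1)) : jacobiCoeff n = 0 :=
  jacobiCoeff_of_forall_two_mul_ne fun m hm ↦ h ⟨2 * m + 1, by linear_combination 4 * hm⟩

theorem jacobiCoeff_of_eq_sq_mul {k n M : ℕ} (h : 8 * k + 1 = M ^ 2 * (8 * n + 1)) :
    jacobiCoeff k = ZMod.χ₄ M * M * jacobiCoeff n := by
  by_cases hn : IsSquare (8 * n + 1)
  · obtain ⟨x, hx⟩ := hn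
    rw [← sq] at hx
    rw [jacobiCoeff_of_eq_sq hx, jacobiCoeff_of_eq_sq (h.trans (by rw [hx, ← mul_pow]))]
    push_cast
    rw [map_mul]
    ring
  · have hk : ¬IsSquare (8 * k + 1) := by
      rintro ⟨y, hy⟩
      have hyM : y ^ 2 = M ^ 2 * (8 * n + 1) := by rw [sq, ← hy, h]
      obtain ⟨x, rfl⟩ := (Nat.pow_dvd_pow_iff two_ne_zero).1 (Dvd.intro _ hyM.symm)
      have hM : M ^ 2 ≠ 0 := left_ne_zero_of_mul (h.symm.trans_ne (Nat.succ_ne_zero _))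
      refine hn ⟨x, mul_left_cancel₀ hM ?_⟩
      rw [← hyM, mul_pow, sq x]
    rw [jacobiCoeff_of_not_isSquare hn, jacobiCoeff_of_not_isSquare hk, mul_zero]

lemma χ₄_sq_mul_sq_modEq_one {K : ℕ} (hK : Odd K) :
    ZMod.χ₄ (K ^ 2 : ℕ) * (K ^ 2 : ℕ) ≡ 1 [ZMOD 8] := by
  have sq_modEq : K ^ 2 ≡ 1 [MOD 8] :=
    ((Nat.modEq_iff_dvd' (Nat.pow_pos hK.pos)).2 (Nat.eight_dvd_sq_sub_one_of_odd hK)).symm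
  rw [ZMod.χ₄_nat_one_mod_four (sq_modEq.of_dvd (by norm_num : 4 ∣ 8)), one_mul]
  exact Int.natCast_modEq_iff.2 sq_modEq

end RegularOverpartition

open RegularOverpartition

theorem stmt_3_general (n : ℕ) {M : ℕ} (hM : Odd M) :
    (regularOverpartitions 4 8 (16 * M ^ 2 * n + 2 * M ^ 2) : ℤ)
      ≡ 4 * (ZMod.χ₄ M * M * jacobiCoeff n) [ZMOD 32] := by
  obtain ⟨c, hc⟩ : 8 ∣ M ^ 2 - 1 := Nat.eight_dvd_sq_sub_one_of_odd hM
  have hMc : M ^ 2 = 8 * c + 1 := (Nat.sub_eq_iff_eq_add (Nat.pow_pos hM.pos)).1 hc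
  have index : 16 * M ^ 2 * n + 2 * M ^ 2 = 16 * (M ^ 2 * n + c) + 2 := by
    linear_combination 2 * hMc
  have dilation : 8 * (M ^ 2 * n + c) + 1 = M ^ 2 * (8 * n + 1) := by linear_combination -hMc
  rw [index, ← jacobiCoeff_of_eq_sq_mul dilation]
  exact regularOverpartitions_sixteen_mul_add_two _

theorem stmt_3 (n α β γ : ℕ) :
    (regularOverpartitions 4 8
        (16 * (3 ^ (4 * α) * 5 ^ (4 * β) * 7 ^ (4 * γ)) * n
          + 2 * (3 ^ (4 * α) * 5 ^ (4 * β) * 7 ^ (4 * γ))) : ℤ)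
      ≡ 4 * jacobiCoeff n [ZMOD 32] := by
  have hodd : Odd (3 ^ α * 5 ^ β * 7 ^ γ) :=
    ((Odd.pow (by decide)).mul (Odd.pow (by decide))).mul (Odd.pow (by decide))
  have hN : 3 ^ (4 * α) * 5 ^ (4 * β) * 7 ^ (4 * γ) = ((3 ^ α * 5 ^ β * 7 ^ γ) ^ 2) ^ 2 := by ring
  have scale := ((χ₄_sq_mul_sq_modEq_one hodd).mul_right (jacobiCoeff n)).mul_left' (c := 4)
  rw [one_mul] at scale
  rw [hN]
  exact (stmt_3_general n hodd.pow).trans scale
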